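/- arXiv:1608.02445 — 2 statements merged into one kernel-verified Lean document; each statement's English description precedes it below -/
import Mathlib

section
/- Let G be a finite group acting by *-automorphisms α on a C*-algebra A. If the action is ergodic, i.e. the fixed-point algebra A^G = {x ∈ A : α_g(x) = x for all g ∈ G} equals ℂ·1, then A is finite dimensional with dim A ≤ |G|. -/
/-!
Ergodicity makes `∑ g, α g x` a scalar `τ x`, and `⟪x, y⟫ = τ (x⋆ y)` is an inner product on `A`.
If `e₁, …, eₙ` is orthonormal, the matrix `M = (α g (eᵢ))` satisfies `Mᴴ M = 1`, so `M Mᴴ` is a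
projection and its trace `∑ᵢ τ (eᵢ eᵢ⋆) = ∑ᵢ ‖eᵢ⋆‖²` is at most `|G|`. If moreover the span of the
`eᵢ` is closed under `⋆`, then `⋆` is a conjugate-linear involution of it, and such an involution
has squared Hilbert–Schmidt norm at least `n`. Hence `n ≤ |G|`; since every finite set lies in a
finite-dimensional `⋆`-closed subspace, this bounds `dim A`.
-/

open Matrix RCLike
open scoped ComplexConjugate ComplexOrder InnerProductSpace Pointwise

theorem card_le_sum_norm_sq_of_involutive {𝕜 E ι : Type*} [RCLike 𝕜] [NormedAddCommGroup E]
    [InnerProductSpace 𝕜 E] [Fintype ι] (b : OrthonormalBasis ι 𝕜 E) {S : E →ₗ⋆[𝕜] E}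
    (hS : Function.Involutive S) : (Fintype.card ι : ℝ) ≤ ∑ i, ‖S (b i)‖ ^ 2 := by
  let s : ι → ι → 𝕜 := fun i j ↦ ⟪b i, S (b j)⟫_𝕜
  -- As `S` is conjugate-linear, `S ∘ S = id` reads `s * conj s = 1`; this is its diagonal.
  have mul_conj_eq_one (i : ι) : ∑ j, conj (s j i) * s i j = 1 := by
    calc ∑ j, conj (s j i) * s i j
      _ = ⟪b i, S (∑ j, s j i • b j)⟫_𝕜 := by simp [s, inner_sum, inner_smul_right]
      _ = ⟪b i, b i⟫_𝕜 := by rw [b.sum_repr', hS]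
      _ = 1 := b.inner_eq_one i
  have one_le (i : ι) : 1 ≤ ∑ j, (‖s j i‖ ^ 2 + ‖s i j‖ ^ 2) / 2 := by
    calc (1 : ℝ) = ‖∑ j, conj (s j i) * s i j‖ := by rw [mul_conj_eq_one, norm_one]
      _ ≤ ∑ j, ‖conj (s j i) * s i j‖ := norm_sum_le _ _
      _ ≤ ∑ j, (‖s j i‖ ^ 2 + ‖s i j‖ ^ 2) / 2 := by
        refine Finset.sum_le_sum fun j _ ↦ ?_
        rw [norm_mul, norm_conj]
        linarith [two_mul_le_add_sq ‖s j i‖ ‖s i j‖]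
  calc (Fintype.card ι : ℝ) = ∑ _i : ι, 1 := by simp
    _ ≤ ∑ i, ∑ j, (‖s j i‖ ^ 2 + ‖s i j‖ ^ 2) / 2 := Finset.sum_le_sum fun i _ ↦ one_le i
    _ = ∑ i, ∑ j, ‖s j i‖ ^ 2 := by
      simp_rw [← Finset.sum_div, Finset.sum_add_distrib]
      rw [Finset.sum_comm (f := fun i j ↦ ‖s i j‖ ^ 2), add_self_div_two]
    _ = ∑ i, ‖S (b i)‖ ^ 2 := by simp_rw [s, b.sum_sq_norm_inner_right]

theorem trace_mul_conjTranspose_le_card {R m n : Type*} [Ring R] [PartialOrder R] [StarRing R]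
    [StarOrderedRing R] [Fintype m] [Fintype n] [DecidableEq n] {M : Matrix m n R}
    (hM : Mᴴ * M = 1) : (M * Mᴴ).trace ≤ Fintype.card m := by
  classical
  have idempotent : M * Mᴴ * (M * Mᴴ) = M * Mᴴ := by
    rw [Matrix.mul_assoc, ← Matrix.mul_assoc Mᴴ, hM, Matrix.one_mul]
  have posSemidef : (1 - M * Mᴴ).PosSemidef := by
    convert posSemidef_conjTranspose_mul_self (1 - M * Mᴴ) using 1
    simp [Matrix.sub_mul, Matrix.mul_sub, idempotent]
  simpa using posSemidef.trace_nonneg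

theorem star_mem_span_union_star {R M : Type*} [CommSemiring R] [StarRing R] [AddCommMonoid M]
    [StarAddMonoid M] [Module R M] [StarModule R M] {s : Set M} {x : M}
    (hx : x ∈ Submodule.span R (s ∪ star s)) : star x ∈ Submodule.span R (s ∪ star s) := by
  have h := Submodule.mem_map_of_mem (f := (starLinearEquiv R : M ≃ₗ⋆[R] M).toLinearMap) hx
  have image_eq : (starLinearEquiv R : M ≃ₗ⋆[R] M).toLinearMap '' (s ∪ star s) = s ∪ star s := by
    change star '' (s ∪ star s) = s ∪ star s
    rw [Set.image_star, Set.union_star, star_star, Set.union_comm]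
  rwa [Submodule.map_span, image_eq] at h

section StarAlgebra

variable {𝕜 A G : Type*} [RCLike 𝕜] [Ring A] [StarRing A] [Algebra 𝕜 A] [Fintype G]

theorem re_nonneg_of_algebraMap_nonneg [Nontrivial A] [PartialOrder A] [StarOrderedRing A]
    [StarModule 𝕜 A] {c : 𝕜} (hc : 0 ≤ algebraMap 𝕜 A c) : 0 ≤ re c := by
  have two_re_nonneg : 0 ≤ algebraMap 𝕜 A (2 * re c : ℝ) := by
    have h := add_nonneg hc (star_nonneg_iff.mpr hc)
    rw [← algebraMap_star_comm, ← map_add, ← starRingEnd_apply, add_conj] at h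
    exact_mod_cast h
  by_contra! re_neg
  have neg_two_re_pos : (0 : 𝕜) < (-(2 * re c) : ℝ) := by
    rw [ofReal_pos]
    linarith
  have two_re_nonpos := algebraMap_nonneg A neg_two_re_pos.le
  rw [ofReal_neg, map_neg, neg_nonneg] at two_re_nonpos
  have two_re_eq_zero := (map_eq_zero (algebraMap 𝕜 A)).mp (two_re_nonpos.antisymm two_re_nonneg)
  norm_cast at two_re_eq_zero
  linarith

/-- `τ` is the linear functional that sums an element over its orbit under the finite family `α`,
the sum being identified with a scalar. For an ergodic action of a group this is the invariant
state, scaled so that `τ 1 = |G|`. -/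
def IsOrbitFunctional (α : G → A ≃⋆ₐ[𝕜] A) (τ : A →ₗ[𝕜] 𝕜) : Prop :=
  ∀ x, ∑ g, α g x = algebraMap 𝕜 A (τ x)

theorem exists_isOrbitFunctional [Nontrivial A] [Group G] {α : G → A ≃⋆ₐ[𝕜] A}
    (hα : ∀ (g h : G) (x : A), α (g * h) x = α g (α h x))
    (hergodic : ∀ x : A, (∀ g : G, α g x = x) → ∃ c : 𝕜, x = c • (1 : A)) :
    ∃ τ : A →ₗ[𝕜] 𝕜, IsOrbitFunctional α τ := by
  have sum_fixed (x : A) (h : G) : α h (∑ g, α g x) = ∑ g, α g x := by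
    simp_rw [map_sum, ← hα]
    exact Equiv.sum_comp (Equiv.mulLeft h) (α · x)
  choose t ht using fun x ↦ hergodic _ (sum_fixed x)
  simp_rw [← Algebra.algebraMap_eq_smul_one] at ht
  have injective := (algebraMap 𝕜 A).injective
  refine ⟨⟨⟨t, fun x y ↦ injective ?_⟩, fun c x ↦ injective ?_⟩, ht⟩
  · simp_rw [map_add, ← ht, map_add, Finset.sum_add_distrib]
  · simp only [RingHom.id_apply, smul_eq_mul, map_mul]
    simp_rw [← ht, map_smul, ← Finset.smul_sum, Algebra.smul_def]

namespace IsOrbitFunctional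

variable {α : G → A ≃⋆ₐ[𝕜] A} {τ : A →ₗ[𝕜] 𝕜}

theorem map_star [Nontrivial A] [StarModule 𝕜 A] (hτ : IsOrbitFunctional α τ) (x : A) :
    τ (star x) = conj (τ x) := by
  apply (algebraMap 𝕜 A).injective
  rw [starRingEnd_apply, algebraMap_star_comm, ← hτ, ← hτ, star_sum]
  simp_rw [StarHomClass.map_star]

variable [PartialOrder A] [StarOrderedRing A]

theorem apply_le_algebraMap (hτ : IsOrbitFunctional α τ) (g : G) {x : A} (hx : 0 ≤ x) :
    α g x ≤ algebraMap 𝕜 A (τ x) := by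
  rw [← hτ]
  exact Finset.single_le_sum (f := (α · x)) (fun h _ ↦ map_nonneg (α h) hx) (Finset.mem_univ g)

theorem eq_zero_of_nonneg [Nonempty G] (hτ : IsOrbitFunctional α τ) {x : A} (hx : 0 ≤ x)
    (hτx : τ x = 0) : x = 0 := by
  obtain ⟨g⟩ := ‹Nonempty G›
  have nonpos := hτ.apply_le_algebraMap g hx
  rw [hτx, map_zero] at nonpos
  exact (map_eq_zero_iff _ (α g).injective).mp (nonpos.antisymm (map_nonneg (α g) hx))

variable [StarModule 𝕜 A] [Nontrivial A]

theorem re_nonneg (hτ : IsOrbitFunctional α τ) {x : A} (hx : 0 ≤ x) : 0 ≤ re (τ x) := by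
  apply re_nonneg_of_algebraMap_nonneg (A := A)
  rw [← hτ]
  exact Finset.sum_nonneg fun g _ ↦ map_nonneg (α g) hx

/-- The inner product `⟪x, y⟫ = τ (x⋆ y)` of the GNS construction for `τ`, on `A` itself. -/
@[reducible]
def innerProductCore [Nonempty G] (hτ : IsOrbitFunctional α τ)
    (hproper : ∀ x : A, star x * x = 0 → x = 0) : InnerProductSpace.Core 𝕜 A where
  inner x y := τ (star x * y)
  conj_inner_symm x y := by rw [← hτ.map_star, star_mul, star_star]
  re_inner_nonneg x := hτ.re_nonneg (star_mul_self_nonneg x)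
  add_left x y z := by rw [star_add, add_mul, map_add]
  smul_left x y c := by rw [star_smul, smul_mul_assoc, map_smul, smul_eq_mul, starRingEnd_apply]
  definite x hx := hproper x (hτ.eq_zero_of_nonneg (star_mul_self_nonneg x) hx)

theorem re_sum_mul_star_le_card (hτ : IsOrbitFunctional α τ) {ι : Type*}
    [Fintype ι] [DecidableEq ι] {e : ι → A}
    (he : ∀ i j, τ (star (e i) * e j) = if i = j then 1 else 0) :
    re (∑ i, τ (e i * star (e i))) ≤ Fintype.card G := by
  let M : Matrix G ι A := .of fun g i ↦ α g (e i)
  have isometry : Mᴴ * M = 1 := by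
    ext i j
    calc (Mᴴ * M) i j = ∑ g, α g (star (e i) * e j) := by
          simp [M, Matrix.mul_apply, StarHomClass.map_star]
      _ = (1 : Matrix ι ι A) i j := by
          rw [hτ, he, Matrix.one_apply, apply_ite (algebraMap 𝕜 A), map_one, map_zero]
  have trace_eq : (M * Mᴴ).trace = algebraMap 𝕜 A (∑ i, τ (e i * star (e i))) := by
    calc (M * Mᴴ).trace = ∑ g, ∑ i, α g (e i * star (e i)) := by
          simp [M, Matrix.trace, Matrix.mul_apply, StarHomClass.map_star]
      _ = algebraMap 𝕜 A (∑ i, τ (e i * star (e i))) := by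
          rw [Finset.sum_comm, map_sum]
          exact Finset.sum_congr rfl fun i _ ↦ hτ _
  have trace_le := trace_mul_conjTranspose_le_card isometry
  rw [trace_eq, ← map_natCast (algebraMap 𝕜 A), ← sub_nonneg, ← map_sub] at trace_le
  simpa using re_nonneg_of_algebraMap_nonneg trace_le

theorem finrank_le_card_of_star_mem [Nonempty G] (hτ : IsOrbitFunctional α τ)
    (hproper : ∀ x : A, star x * x = 0 → x = 0) {V : Submodule 𝕜 A} [FiniteDimensional 𝕜 V]
    (hV : ∀ x ∈ V, star x ∈ V) : Module.finrank 𝕜 V ≤ Fintype.card G := by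
  let core := hτ.innerProductCore hproper
  let : NormedAddCommGroup A := core.toNormedAddCommGroup
  let : InnerProductSpace 𝕜 A := .ofCore core.toCore
  let b := stdOrthonormalBasis 𝕜 V
  let S : V →ₗ⋆[𝕜] V := (starLinearEquiv 𝕜 : A ≃ₗ⋆[𝕜] A).toLinearMap.restrict hV
  have involutive : Function.Involutive S := fun x ↦ Subtype.ext (star_star (x : A))
  have norm_sq (i) : ‖S (b i)‖ ^ 2 = re (τ ((b i : A) * star (b i : A))) := by
    rw [norm_sq_eq_re_inner (𝕜 := 𝕜)]
    change re (τ (star (star (b i : A)) * star (b i : A))) = _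
    rw [star_star]
  have card_le := card_le_sum_norm_sq_of_involutive b involutive
  simp_rw [norm_sq, ← map_sum re, Fintype.card_fin] at card_le
  have sum_le := hτ.re_sum_mul_star_le_card (orthonormal_iff_ite.mp b.orthonormal)
  exact_mod_cast card_le.trans sum_le

theorem rank_le_card [Nonempty G] (hτ : IsOrbitFunctional α τ)
    (hproper : ∀ x : A, star x * x = 0 → x = 0) : Module.rank 𝕜 A ≤ Fintype.card G := by
  refine rank_le fun s hs ↦ ?_
  let V := Submodule.span 𝕜 ((s : Set A) ∪ star (s : Set A))
  have : FiniteDimensional 𝕜 V :=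
    .span_of_finite 𝕜 (s.finite_toSet.union s.finite_toSet.star)
  calc s.card = Module.finrank 𝕜 (Submodule.span 𝕜 (s : Set A)) :=
        (finrank_span_finset_eq_card hs).symm
    _ ≤ Module.finrank 𝕜 V := Submodule.finrank_mono (Submodule.span_mono Set.subset_union_left)
    _ ≤ Fintype.card G := hτ.finrank_le_card_of_star_mem hproper fun _ ↦ star_mem_span_union_star

end IsOrbitFunctional

end StarAlgebra

theorem ergodic_action_finite_dimensional_general {𝕜 A G : Type*} [RCLike 𝕜] [Ring A] [StarRing A]
    [PartialOrder A] [StarOrderedRing A] [Algebra 𝕜 A] [StarModule 𝕜 A]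
    (hproper : ∀ x : A, star x * x = 0 → x = 0) [Group G] [Finite G]
    (α : G → A ≃⋆ₐ[𝕜] A) (hα : ∀ (g h : G) (x : A), α (g * h) x = α g (α h x))
    (hergodic : ∀ x : A, (∀ g : G, α g x = x) → ∃ c : 𝕜, x = c • (1 : A)) :
    FiniteDimensional 𝕜 A ∧ Module.finrank 𝕜 A ≤ Nat.card G := by
  have := Fintype.ofFinite G
  have rank_le : Module.rank 𝕜 A ≤ Nat.card G := by
    rcases subsingleton_or_nontrivial A with _ | _
    · simp
    · obtain ⟨τ, hτ⟩ := exists_isOrbitFunctional hα hergodic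
      exact Nat.card_eq_fintype_card (α := G) ▸ hτ.rank_le_card hproper
  exact ⟨Module.rank_lt_aleph0_iff.mp (rank_le.trans_lt Cardinal.natCast_lt_aleph0),
    Module.finrank_le_of_rank_le rank_le⟩

/-- If a finite group `G` acts by *-automorphisms on a C*-algebra `A` and the
action is ergodic (the fixed-point algebra is `ℂ·1`), then `A` is finite dimensional with
`dim A ≤ |G|`. -/
theorem ergodic_action_finite_dimensional (A : Type*) [NormedRing A] [StarRing A]
    [CStarRing A] [NormedAlgebra ℂ A] [CompleteSpace A] [StarModule ℂ A]
    (G : Type*) [Group G] [Finite G]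
    (α : G → A ≃⋆ₐ[ℂ] A) (hα : ∀ (g h : G) (x : A), α (g * h) x = α g (α h x))
    (hergodic : ∀ x : A, (∀ g : G, α g x = x) → ∃ c : ℂ, x = c • (1 : A)) :
    FiniteDimensional ℂ A ∧ Module.finrank ℂ A ≤ Nat.card G := by
  let : CStarAlgebra A := {}
  let := CStarAlgebra.spectralOrder A
  have := CStarAlgebra.spectralOrderedRing A
  exact ergodic_action_finite_dimensional_general
    (fun x ↦ (CStarRing.star_mul_self_eq_zero_iff x).mp) α hα hergodic
end

section
/- Let G be a finite group, G₀ ⊆ G a subgroup, and (π, U) the covariant representation of (A, G, α) induced from a covariant representation (π₀, V) of (A, G₀, α|_{G₀}) on H₀. Suppose: (a) G₀ = {g ∈ G : π₀ ∘ α_g is quasi-equivalent to π₀}, and (b) π₀ is a factor representation. Then every operator T in the commutant of π(A) commutes with each of the projections p_0,...,p_r onto the subspaces U_{g_j}H₀, where g_0 = 1, g_1,...,g_r are representatives of the left G₀-cosets in G. -/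
/-!
Two factor representations with a nonzero intertwiner `S : H₁ → H₂` are quasi-equivalent. The
closed span of the ranges of all intertwiners is invariant under both `π₂(A)` and `π₂(A)'`, so the
projection onto its complement is a scalar, and it kills `S ≠ 0`; hence the ranges are total. For
intertwiners `S`, `T` the operator `S* T` lies in `π₁(A)'`, so for a unitary `u` in `π₁(A)''` the
assignment `∑ Sᵢ ξᵢ ↦ ∑ Sᵢ u ξᵢ` is isometric and extends to all of `H₂`. Unitaries span
`π₁(A)''`, so every `x ∈ π₁(A)''` has a unique partner `y ∈ π₂(A)''` with `y S = S x` for all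
intertwiners `S`, and `x ↦ y` is the quasi-equivalence.

The block `U_{g_j} H₀` carries the factor representation `π₀ ∘ α_{g_j}⁻¹`. For `j ≠ k` these are not
quasi-equivalent, so the off-diagonal blocks of an operator in `π(A)'`, being intertwiners, vanish.
-/

variable {A : Type*} [NormedRing A] [StarRing A] [CStarRing A] [NormedAlgebra ℂ A]
  [CompleteSpace A] [StarModule ℂ A]

/-- The von Neumann algebra (double commutant) generated by a representation
`π : A → B(H)`. -/
noncomputable def genVN {H : Type*} [NormedAddCommGroup H] [InnerProductSpace ℂ H]
    [CompleteSpace H] (π : A →⋆ₐ[ℂ] (H →L[ℂ] H)) : StarSubalgebra ℂ (H →L[ℂ] H) :=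
  StarSubalgebra.centralizer ℂ
    (↑(StarSubalgebra.centralizer ℂ (Set.range (⇑π))) : Set (H →L[ℂ] H))

lemma mem_genVN {H : Type*} [NormedAddCommGroup H] [InnerProductSpace ℂ H]
    [CompleteSpace H] (π : A →⋆ₐ[ℂ] (H →L[ℂ] H)) (a : A) : π a ∈ genVN π := by
  rw [genVN, StarSubalgebra.mem_centralizer_iff]
  intro g hg
  have hg' : star g ∈ StarSubalgebra.centralizer ℂ (Set.range (⇑π)) := star_mem hg
  refine ⟨(((StarSubalgebra.mem_centralizer_iff ℂ).mp hg) (π a) ⟨a, rfl⟩).1.symm, ?_⟩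
  exact (((StarSubalgebra.mem_centralizer_iff ℂ).mp hg') (π a) ⟨a, rfl⟩).1.symm

/-- Quasi-equivalence of two representations of a C*-algebra: a *-isomorphism of the
generated von Neumann algebras carrying one representation to the other. -/
def QuasiEquiv {H₁ H₂ : Type*} [NormedAddCommGroup H₁] [InnerProductSpace ℂ H₁]
    [CompleteSpace H₁] [NormedAddCommGroup H₂] [InnerProductSpace ℂ H₂] [CompleteSpace H₂]
    (π₁ : A →⋆ₐ[ℂ] (H₁ →L[ℂ] H₁)) (π₂ : A →⋆ₐ[ℂ] (H₂ →L[ℂ] H₂)) : Prop :=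
  ∃ Φ : genVN π₁ ≃⋆ₐ[ℂ] genVN π₂,
    ∀ a : A, (Φ ⟨π₁ a, mem_genVN π₁ a⟩ : H₂ →L[ℂ] H₂) = π₂ a

open ContinuousLinearMap

section OperatorFamilies

variable {𝕜 ι E F G : Type*} [RCLike 𝕜]
  [NormedAddCommGroup E] [InnerProductSpace 𝕜 E] [NormedAddCommGroup F] [InnerProductSpace 𝕜 F]

lemma eq_of_comp_eq_of_dense_iSup_range [NormedAddCommGroup G] [NormedSpace 𝕜 G]
    {S : ι → E →L[𝕜] F} (hS : Dense ((⨆ i, (S i).range : Submodule 𝕜 F) : Set F))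
    {y z : F →L[𝕜] G} (h : ∀ i, y ∘L S i = z ∘L S i) : y = z := by
  have hle : ⨆ i, (S i).range ≤ LinearMap.eqLocus y.toLinearMap z.toLinearMap :=
    iSup_le fun i => by rintro _ ⟨v, rfl⟩; exact congr($(h i) v)
  exact DFunLike.coe_injective (Continuous.ext_on hS y.continuous z.continuous hle)

variable [CompleteSpace E] [CompleteSpace F]

lemma inner_apply_apply_of_commute {S T : E →L[𝕜] F} {u : E →L[𝕜] E} (hu : adjoint u ∘L u = 1)
    (hcomm : Commute (adjoint S ∘L T) u) (v w : E) :
    inner 𝕜 (S (u v)) (T (u w)) = inner 𝕜 (S v) (T w) := by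
  have hTu : adjoint S (T (u w)) = u (adjoint S (T w)) := congr($hcomm.eq w)
  have hu' : adjoint u (u (adjoint S (T w))) = adjoint S (T w) := congr($hu _)
  rw [← adjoint_inner_right, hTu, ← adjoint_inner_right, hu', adjoint_inner_right]

lemma exists_comp_eq_comp_of_dense_iSup_range {S : ι → E →L[𝕜] F}
    (hS : Dense ((⨆ i, (S i).range : Submodule 𝕜 F) : Set F))
    {u : E →L[𝕜] E} (hu : adjoint u ∘L u = 1) (hcomm : ∀ i j, Commute (adjoint (S i) ∘L S j) u) :
    ∃ v : F →L[𝕜] F, ∀ i, v ∘L S i = S i ∘L u := by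
  let sumS : (ι →₀ E) →ₗ[𝕜] F := Finsupp.lsum 𝕜 fun i => (S i).toLinearMap
  let sumSu : (ι →₀ E) →ₗ[𝕜] F := Finsupp.lsum 𝕜 fun i => (S i ∘L u).toLinearMap
  have hdense : DenseRange sumS := by
    have hle : ⨆ i, (S i).range ≤ LinearMap.range sumS := iSup_le fun i => by
      rintro _ ⟨v, rfl⟩
      exact ⟨Finsupp.single i v, by simp [sumS]⟩
    exact hS.mono hle
  have hinner (f : ι →₀ E) : inner 𝕜 (sumSu f) (sumSu f) = inner 𝕜 (sumS f) (sumS f) := by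
    simp only [sumS, sumSu, Finsupp.lsum_apply, Finsupp.sum, sum_inner, inner_sum]
    exact Finset.sum_congr rfl fun i _ => Finset.sum_congr rfl fun j _ =>
      inner_apply_apply_of_commute hu (hcomm _ _) _ _
  have hnorm (f : ι →₀ E) : ‖sumSu f‖ ≤ 1 * ‖sumS f‖ := by
    rw [one_mul, @norm_eq_sqrt_re_inner 𝕜, hinner, ← norm_eq_sqrt_re_inner]
  refine ⟨sumSu.extendOfNorm sumS, fun i => ContinuousLinearMap.ext fun v => ?_⟩
  simpa [sumS, sumSu] using LinearMap.extendOfNorm_eq hdense ⟨1, hnorm⟩ (Finsupp.single i v)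

lemma commute_starProjection_of_mem_invtSubmodule {K : Submodule 𝕜 E} [K.HasOrthogonalProjection]
    {T : E →L[𝕜] E} (hT : K ∈ Module.End.invtSubmodule T.toLinearMap)
    (hT' : K ∈ Module.End.invtSubmodule (adjoint T).toLinearMap) :
    Commute K.starProjection T := by
  rw [K.isIdempotentElem_starProjection.commute_iff, K.range_starProjection, K.ker_starProjection]
  exact ⟨hT, orthogonal_mem_invtSubmodule hT'⟩

end OperatorFamilies

lemma commute_of_sum_eq_one {R J : Type*} [Semiring R] [Fintype J] {p : J → R}
    (hp : ∑ j, p j = 1) {T : R} (hT : Pairwise fun j k => p j * T * p k = 0) (j : J) :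
    Commute T (p j) :=
  calc T * p j = ∑ k, p k * T * p j := by rw [← Finset.sum_mul, ← Finset.sum_mul, hp, one_mul]
    _ = p j * T * p j := Fintype.sum_eq_single j fun _ hk => hT hk
    _ = ∑ k, p j * T * p k := (Fintype.sum_eq_single j fun _ hk => hT hk.symm).symm
    _ = p j * T := by rw [← Finset.mul_sum, hp, mul_one]

section Representations

variable {H₁ H₂ H₃ : Type*}
  [NormedAddCommGroup H₁] [InnerProductSpace ℂ H₁] [CompleteSpace H₁]
  [NormedAddCommGroup H₂] [InnerProductSpace ℂ H₂] [CompleteSpace H₂]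
  [NormedAddCommGroup H₃] [InnerProductSpace ℂ H₃] [CompleteSpace H₃]

section Intertwiners

variable {B C : Type*} [Semiring B] [Algebra ℂ B] [Star B] [Semiring C] [Algebra ℂ C] [Star C]
  {π₁ : B →⋆ₐ[ℂ] (H₁ →L[ℂ] H₁)} {π₂ : B →⋆ₐ[ℂ] (H₂ →L[ℂ] H₂)} {π₃ : B →⋆ₐ[ℂ] (H₃ →L[ℂ] H₃)}

/-- `S` is an intertwining operator from the representation `π₁` to the representation `π₂`. -/
def Intertwines (π₁ : B →⋆ₐ[ℂ] (H₁ →L[ℂ] H₁)) (π₂ : B →⋆ₐ[ℂ] (H₂ →L[ℂ] H₂))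
    (S : H₁ →L[ℂ] H₂) : Prop :=
  ∀ b, S ∘L π₁ b = π₂ b ∘L S

lemma intertwines_self_iff {T : H₁ →L[ℂ] H₁} :
    Intertwines π₁ π₁ T ↔ T ∈ Set.centralizer (Set.range π₁) := by
  simp only [Intertwines, Set.mem_centralizer_iff, Set.forall_mem_range, mul_def, eq_comm]

lemma Intertwines.comp {S : H₂ →L[ℂ] H₃} {T : H₁ →L[ℂ] H₂} (hS : Intertwines π₂ π₃ S)
    (hT : Intertwines π₁ π₂ T) : Intertwines π₁ π₃ (S ∘L T) := fun b => by
  rw [comp_assoc, hT b, ← comp_assoc, hS b, comp_assoc]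

lemma adjoint_map_star (π : B →⋆ₐ[ℂ] (H₁ →L[ℂ] H₁)) (b : B) : adjoint (π (star b)) = π b := by
  rw [map_star, star_eq_adjoint, adjoint_adjoint]

lemma Intertwines.adjoint {S : H₁ →L[ℂ] H₂} (hS : Intertwines π₁ π₂ S) :
    Intertwines π₂ π₁ (adjoint S) := fun b => by
  simpa only [adjoint_comp, adjoint_map_star] using
    congrArg ContinuousLinearMap.adjoint (hS (star b)).symm

/-- Two representations are disjoint if the zero operator is their only intertwiner. -/
def DisjointReps (π₁ : B →⋆ₐ[ℂ] (H₁ →L[ℂ] H₁)) (π₂ : B →⋆ₐ[ℂ] (H₂ →L[ℂ] H₂)) : Prop :=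
  ∀ S : H₁ →L[ℂ] H₂, Intertwines π₁ π₂ S → S = 0

lemma commute_comp_adjoint_of_pairwise_disjointReps {J : Type*} [Fintype J] {K : J → Type*}
    [∀ j, NormedAddCommGroup (K j)] [∀ j, InnerProductSpace ℂ (K j)] [∀ j, CompleteSpace (K j)]
    {σ : ∀ j, B →⋆ₐ[ℂ] (K j →L[ℂ] K j)} (hσ : Pairwise fun j k => DisjointReps (σ j) (σ k))
    {W : ∀ j, K j →L[ℂ] H₁} (hW : ∀ j, Intertwines (σ j) π₁ (W j))
    (hsum : ∑ j, W j ∘L adjoint (W j) = 1) {T : H₁ →L[ℂ] H₁} (hT : Intertwines π₁ π₁ T) (j : J) :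
    Commute T (W j ∘L adjoint (W j)) := by
  refine commute_of_sum_eq_one (p := fun j => W j ∘L adjoint (W j)) hsum (fun j k hjk => ?_) j
  have hblock : adjoint (W j) ∘L T ∘L W k = 0 :=
    hσ hjk.symm _ ((hW j).adjoint.comp (hT.comp (hW k)))
  change W j ∘L (adjoint (W j) ∘L T ∘L W k) ∘L adjoint (W k) = 0
  rw [hblock, zero_comp, comp_zero]

/-- The linear span of the ranges of all intertwiners from `π₁` to `π₂`. When it is dense, an
operator on `H₂` is determined by its compositions with the intertwiners. -/
def intertwinerRange (π₁ : B →⋆ₐ[ℂ] (H₁ →L[ℂ] H₁)) (π₂ : B →⋆ₐ[ℂ] (H₂ →L[ℂ] H₂)) :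
    Submodule ℂ H₂ :=
  ⨆ S : {S : H₁ →L[ℂ] H₂ // Intertwines π₁ π₂ S}, S.1.range

lemma Intertwines.range_le {S : H₁ →L[ℂ] H₂} (hS : Intertwines π₁ π₂ S) :
    S.range ≤ intertwinerRange π₁ π₂ :=
  le_iSup (fun S : {S : H₁ →L[ℂ] H₂ // Intertwines π₁ π₂ S} => S.1.range) ⟨S, hS⟩

lemma intertwinerRange_mem_invtSubmodule_of_forall_apply_mem {T : H₂ →L[ℂ] H₂}
    (h : ∀ S, Intertwines π₁ π₂ S → ∀ v, T (S v) ∈ intertwinerRange π₁ π₂) :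
    intertwinerRange π₁ π₂ ∈ Module.End.invtSubmodule T.toLinearMap :=
  (Module.End.mem_invtSubmodule _).2 <| iSup_le fun S => by
    rintro _ ⟨v, rfl⟩
    exact h S.1 S.2 v

lemma intertwinerRange_mem_invtSubmodule (b : B) :
    intertwinerRange π₁ π₂ ∈ Module.End.invtSubmodule (π₂ b).toLinearMap :=
  intertwinerRange_mem_invtSubmodule_of_forall_apply_mem fun _ hS v =>
    hS.range_le ⟨π₁ b v, congr($(hS b) v)⟩

lemma Intertwines.intertwinerRange_mem_invtSubmodule {T : H₂ →L[ℂ] H₂}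
    (hT : Intertwines π₂ π₂ T) :
    intertwinerRange π₁ π₂ ∈ Module.End.invtSubmodule T.toLinearMap :=
  intertwinerRange_mem_invtSubmodule_of_forall_apply_mem fun _ hS v =>
    (hT.comp hS).range_le ⟨v, rfl⟩

/-- A representation is a factor representation if the center of the von Neumann algebra it
generates, the intersection of its commutant and its double commutant, is trivial. -/
def IsFactorRep (π : B →⋆ₐ[ℂ] (H₁ →L[ℂ] H₁)) : Prop :=
  ∀ T : H₁ →L[ℂ] H₁, T ∈ Set.centralizer (Set.range π) →
    T ∈ Set.centralizer (Set.centralizer (Set.range π)) → ∃ c : ℂ, T = c • (1 : H₁ →L[ℂ] H₁)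

lemma IsFactorRep.comp_of_surjective (hπ : IsFactorRep π₁) {φ : C →⋆ₐ[ℂ] B}
    (hφ : Function.Surjective φ) : IsFactorRep (π₁.comp φ) := by
  rwa [IsFactorRep, StarAlgHom.coe_comp, hφ.range_comp]

lemma IsFactorRep.dense_intertwinerRange (hπ₂ : IsFactorRep π₂) {S : H₁ →L[ℂ] H₂}
    (hS : Intertwines π₁ π₂ S) (hS0 : S ≠ 0) : Dense (intertwinerRange π₁ π₂ : Set H₂) := by
  set K := intertwinerRange π₁ π₂
  have hcomm {T : H₂ →L[ℂ] H₂} (hT : K ∈ Module.End.invtSubmodule T.toLinearMap)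
      (hT' : K ∈ Module.End.invtSubmodule (adjoint T).toLinearMap) :
      Commute Kᗮ.starProjection T :=
    commute_starProjection_of_mem_invtSubmodule (orthogonal_mem_invtSubmodule hT')
      (orthogonal_mem_invtSubmodule (by rwa [adjoint_adjoint]))
  have hcommutant : Kᗮ.starProjection ∈ Set.centralizer (Set.range π₂) := by
    rintro _ ⟨b, rfl⟩
    refine (hcomm (intertwinerRange_mem_invtSubmodule b) ?_).symm.eq
    rw [← star_eq_adjoint, ← map_star]
    exact intertwinerRange_mem_invtSubmodule _
  have hbicommutant :
      Kᗮ.starProjection ∈ Set.centralizer (Set.centralizer (Set.range π₂)) := fun T hT =>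
    have hT := intertwines_self_iff.2 hT
    (hcomm hT.intertwinerRange_mem_invtSubmodule
      hT.adjoint.intertwinerRange_mem_invtSubmodule).symm.eq
  obtain ⟨c, hc⟩ := hπ₂ _ hcommutant hbicommutant
  obtain ⟨v, hv⟩ := DFunLike.ne_iff.1 hS0
  have hSv : Kᗮ.starProjection (S v) = 0 :=
    Kᗮ.starProjection_apply_eq_zero_iff.2 (K.le_orthogonal_orthogonal (hS.range_le ⟨v, rfl⟩))
  have hc0 : c = 0 := by
    rw [hc] at hSv
    exact (smul_eq_zero.1 hSv).resolve_right hv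
  rw [Submodule.dense_iff_topologicalClosure_eq_top, Submodule.topologicalClosure_eq_top_iff,
    ← Kᗮ.range_starProjection, hc, hc0, zero_smul, toLinearMap_zero, LinearMap.range_zero]

end Intertwiners

section GeneratedAlgebras

variable {B : Type*} [NormedRing B] [StarRing B] [NormedAlgebra ℂ B]
  {π₁ : B →⋆ₐ[ℂ] (H₁ →L[ℂ] H₁)} {π₂ : B →⋆ₐ[ℂ] (H₂ →L[ℂ] H₂)}

lemma coe_genVN (π : B →⋆ₐ[ℂ] (H₁ →L[ℂ] H₁)) :
    (genVN π : Set (H₁ →L[ℂ] H₁)) = Set.centralizer (Set.centralizer (Set.range π)) := by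
  have hstar : star (Set.range π) = Set.range π := StarMemClass.star_coe_eq π.range
  rw [genVN, StarSubalgebra.coe_centralizer_centralizer, hstar, Set.union_self]

lemma mem_genVN_iff {x : H₁ →L[ℂ] H₁} :
    x ∈ genVN π₁ ↔ ∀ T, Intertwines π₁ π₁ T → Commute T x := by
  simp only [← SetLike.mem_coe, coe_genVN, Set.mem_centralizer_iff (S := Set.centralizer _),
    intertwines_self_iff, commute_iff_eq]

lemma isClosed_genVN (π : B →⋆ₐ[ℂ] (H₁ →L[ℂ] H₁)) :
    IsClosed (genVN π : Set (H₁ →L[ℂ] H₁)) := by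
  rw [coe_genVN]
  exact Set.isClosed_centralizer _

lemma span_unitary_genVN (π : B →⋆ₐ[ℂ] (H₁ →L[ℂ] H₁)) :
    Submodule.span ℂ (unitary (genVN π) : Set (genVN π)) = ⊤ :=
  letI := StarSubalgebra.cstarAlgebra (genVN π) (h_closed := isClosed_genVN π)
  CStarAlgebra.span_unitary _

lemma exists_comp_eq_comp_of_mem_genVN (hd : Dense (intertwinerRange π₁ π₂ : Set H₂))
    (x : genVN π₁) : ∃ y : H₂ →L[ℂ] H₂, ∀ S, Intertwines π₁ π₂ S → y ∘L S = S ∘L x.1 := by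
  let transferable : Submodule ℂ (genVN π₁) :=
    { carrier := {x | ∃ y : H₂ →L[ℂ] H₂, ∀ S, Intertwines π₁ π₂ S → y ∘L S = S ∘L x.1}
      add_mem' := by
        rintro x₁ x₂ ⟨y₁, h₁⟩ ⟨y₂, h₂⟩
        exact ⟨y₁ + y₂, fun S hS => by
          rw [add_comp, h₁ S hS, h₂ S hS, ← comp_add]; rfl⟩
      zero_mem' := ⟨0, fun S _ => by rw [zero_comp]; exact (comp_zero S).symm⟩
      smul_mem' := by
        rintro c x ⟨y, h⟩
        exact ⟨c • y, fun S hS => by rw [smul_comp, h S hS, ← comp_smul]; rfl⟩ }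
  suffices htop : ⊤ ≤ transferable from htop Submodule.mem_top
  rw [← span_unitary_genVN, Submodule.span_le]
  intro u hu
  have hisometry : adjoint u.1 ∘L u.1 = 1 := congrArg Subtype.val (Unitary.star_mul_self_of_mem hu)
  obtain ⟨v, hv⟩ := exists_comp_eq_comp_of_dense_iSup_range hd hisometry fun S T =>
    mem_genVN_iff.1 u.2 _ (S.2.adjoint.comp T.2)
  exact ⟨v, fun S hS => hv ⟨S, hS⟩⟩

/-- The graph of the correspondence between the von Neumann algebras generated by `π₁` and `π₂` that
is compatible with all intertwiners. Intertwiners in both directions are included in the definition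
so that the graph is visibly closed under `star` and symmetric in `π₁` and `π₂`. -/
def intertwiningGraph (π₁ : B →⋆ₐ[ℂ] (H₁ →L[ℂ] H₁)) (π₂ : B →⋆ₐ[ℂ] (H₂ →L[ℂ] H₂)) :
    StarSubalgebra ℂ (genVN π₁ × genVN π₂) where
  carrier := {z | (∀ S, Intertwines π₁ π₂ S → z.2.1 ∘L S = S ∘L z.1.1) ∧
    ∀ T, Intertwines π₂ π₁ T → z.1.1 ∘L T = T ∘L z.2.1}
  mul_mem' := by
    rintro z w ⟨hz, hz'⟩ ⟨hw, hw'⟩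
    refine ⟨fun S hS => ?_, fun T hT => ?_⟩
    · change (z.2.1 ∘L w.2.1) ∘L S = S ∘L z.1.1 ∘L w.1.1
      rw [comp_assoc, hw S hS, ← comp_assoc, hz S hS, comp_assoc]
    · change (z.1.1 ∘L w.1.1) ∘L T = T ∘L z.2.1 ∘L w.2.1
      rw [comp_assoc, hw' T hT, ← comp_assoc, hz' T hT, comp_assoc]
  add_mem' := by
    rintro z w ⟨hz, hz'⟩ ⟨hw, hw'⟩
    refine ⟨fun S hS => ?_, fun T hT => ?_⟩
    · change (z.2.1 + w.2.1) ∘L S = S ∘L (z.1.1 + w.1.1)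
      rw [add_comp, hz S hS, hw S hS, comp_add]
    · change (z.1.1 + w.1.1) ∘L T = T ∘L (z.2.1 + w.2.1)
      rw [add_comp, hz' T hT, hw' T hT, comp_add]
  algebraMap_mem' c :=
    ⟨fun S _ => ContinuousLinearMap.ext fun v => (map_smul S c v).symm,
      fun T _ => ContinuousLinearMap.ext fun v => (map_smul T c v).symm⟩
  star_mem' := by
    rintro z ⟨hz, hz'⟩
    refine ⟨fun S hS => ?_, fun T hT => ?_⟩
    · change adjoint z.2.1 ∘L S = S ∘L adjoint z.1.1
      simpa only [adjoint_comp, adjoint_adjoint] using (congrArg adjoint (hz' _ hS.adjoint)).symm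
    · change adjoint z.1.1 ∘L T = T ∘L adjoint z.2.1
      simpa only [adjoint_comp, adjoint_adjoint] using (congrArg adjoint (hz _ hT.adjoint)).symm

lemma swap_mem_intertwiningGraph {z : genVN π₁ × genVN π₂} :
    z.swap ∈ intertwiningGraph π₂ π₁ ↔ z ∈ intertwiningGraph π₁ π₂ :=
  and_comm

lemma existsUnique_mem_intertwiningGraph (hd : Dense (intertwinerRange π₁ π₂ : Set H₂))
    (x : genVN π₁) : ∃! y : genVN π₂, (x, y) ∈ intertwiningGraph π₁ π₂ := by
  obtain ⟨y, hy⟩ := exists_comp_eq_comp_of_mem_genVN hd x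
  have hy_mem : y ∈ genVN π₂ := mem_genVN_iff.2 fun t ht =>
    eq_of_comp_eq_of_dense_iSup_range hd fun S => by
      rw [mul_def, mul_def, comp_assoc, comp_assoc, hy _ S.2, hy _ (ht.comp S.2), comp_assoc]
  have hxy (T : H₂ →L[ℂ] H₁) (hT : Intertwines π₂ π₁ T) : x.1 ∘L T = T ∘L y :=
    eq_of_comp_eq_of_dense_iSup_range hd fun S => by
      have hx : (T ∘L S.1) ∘L x.1 = x.1 ∘L (T ∘L S.1) := mem_genVN_iff.1 x.2 _ (hT.comp S.2)
      rw [comp_assoc, comp_assoc, hy _ S.2, ← comp_assoc T, hx]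
  refine ⟨⟨y, hy_mem⟩, ⟨hy, hxy⟩, fun y' hy' => Subtype.ext ?_⟩
  exact eq_of_comp_eq_of_dense_iSup_range hd fun S => (hy'.1 _ S.2).trans (hy _ S.2).symm

lemma bijective_fst_intertwiningGraph (hd : Dense (intertwinerRange π₁ π₂ : Set H₂)) :
    Function.Bijective fun z : intertwiningGraph π₁ π₂ => z.1.1 := by
  refine ⟨?_, fun x => ?_⟩
  · rintro ⟨⟨x, y⟩, h⟩ ⟨⟨_, y'⟩, h'⟩ rfl
    obtain rfl := (existsUnique_mem_intertwiningGraph hd x).unique h h'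
    rfl
  · obtain ⟨y, hy, -⟩ := existsUnique_mem_intertwiningGraph hd x
    exact ⟨⟨(x, y), hy⟩, rfl⟩

lemma bijective_snd_intertwiningGraph (hd : Dense (intertwinerRange π₂ π₁ : Set H₁)) :
    Function.Bijective fun z : intertwiningGraph π₁ π₂ => z.1.2 :=
  (bijective_fst_intertwiningGraph hd).comp
    ((Equiv.prodComm _ _).subtypeEquiv fun _ => swap_mem_intertwiningGraph.symm).bijective

end GeneratedAlgebras

section QuasiEquivalence

variable {π₁ : A →⋆ₐ[ℂ] (H₁ →L[ℂ] H₁)} {π₂ : A →⋆ₐ[ℂ] (H₂ →L[ℂ] H₂)}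

lemma map_mem_intertwiningGraph (a : A) :
    ((⟨π₁ a, mem_genVN π₁ a⟩, ⟨π₂ a, mem_genVN π₂ a⟩) : genVN π₁ × genVN π₂) ∈
      intertwiningGraph π₁ π₂ :=
  ⟨fun _ hS => (hS a).symm, fun _ hT => (hT a).symm⟩

lemma quasiEquiv_of_dense_intertwinerRange (hd₁ : Dense (intertwinerRange π₂ π₁ : Set H₁))
    (hd₂ : Dense (intertwinerRange π₁ π₂ : Set H₂)) : QuasiEquiv π₁ π₂ := by
  let Γ := intertwiningGraph π₁ π₂
  let e₁ : Γ ≃⋆ₐ[ℂ] genVN π₁ :=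
    StarAlgEquiv.ofBijective ((StarAlgHom.fst ℂ _ _).comp Γ.subtype)
      (bijective_fst_intertwiningGraph hd₂)
  let e₂ : Γ ≃⋆ₐ[ℂ] genVN π₂ :=
    StarAlgEquiv.ofBijective ((StarAlgHom.snd ℂ _ _).comp Γ.subtype)
      (bijective_snd_intertwiningGraph hd₁)
  refine ⟨e₁.symm.trans e₂, fun a => ?_⟩
  have ha : e₁.symm ⟨π₁ a, mem_genVN π₁ a⟩ = ⟨_, map_mem_intertwiningGraph a⟩ :=
    e₁.symm_apply_eq.2 rfl
  rw [StarAlgEquiv.trans_apply, ha]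
  rfl

lemma IsFactorRep.disjointReps_of_not_quasiEquiv (hπ₁ : IsFactorRep π₁) (hπ₂ : IsFactorRep π₂)
    (h : ¬ QuasiEquiv π₁ π₂) : DisjointReps π₁ π₂ := fun S hS => by
  by_contra hS0
  exact h (quasiEquiv_of_dense_intertwinerRange
    (hπ₁.dense_intertwinerRange hS.adjoint (by simpa using hS0))
    (hπ₂.dense_intertwinerRange hS hS0))

end QuasiEquivalence

section InducedRepresentations

variable {B : Type*} [Semiring B] [Algebra ℂ B] [Star B]
  {π₀ : B →⋆ₐ[ℂ] (H₁ →L[ℂ] H₁)} {π : B →⋆ₐ[ℂ] (H₂ →L[ℂ] H₂)} {ι : H₁ →L[ℂ] H₂}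

lemma intertwines_of_isometry_of_compression (hι : adjoint ι ∘L ι = 1)
    (hinv : ∀ b, π b * (ι ∘L adjoint ι) = (ι ∘L adjoint ι) * π b)
    (hcompr : ∀ b, adjoint ι ∘L π b ∘L ι = π₀ b) : Intertwines π₀ π ι := fun b =>
  calc ι ∘L π₀ b = ((ι ∘L adjoint ι) * π b) ∘L ι := by rw [← hcompr]; rfl
    _ = π b ∘L ι ∘L (adjoint ι ∘L ι) := by rw [← hinv]; rfl
    _ = π b ∘L ι := by rw [hι]; rfl

lemma Intertwines.unitary_comp (hι : Intertwines π₀ π ι) {φ : B ≃⋆ₐ[ℂ] B}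
    {u : unitary (H₂ →L[ℂ] H₂)}
    (hu : ∀ b, π (φ b) = (u : H₂ →L[ℂ] H₂) * π b * star (u : H₂ →L[ℂ] H₂)) :
    Intertwines (π₀.comp (φ.symm : B →⋆ₐ[ℂ] B)) π ((u : H₂ →L[ℂ] H₂) ∘L ι) := fun b => by
  have hub : π b * (u : H₂ →L[ℂ] H₂) = u * π (φ.symm b) := by
    conv_lhs => rw [← φ.apply_symm_apply b, hu, mul_assoc, Unitary.coe_star_mul_self, mul_one]
  calc ((u : H₂ →L[ℂ] H₂) ∘L ι) ∘L π₀ (φ.symm b) =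
        ((u : H₂ →L[ℂ] H₂) * π (φ.symm b)) ∘L ι := by
        rw [comp_assoc, hι, ← comp_assoc]; rfl
    _ = π b ∘L (u : H₂ →L[ℂ] H₂) ∘L ι := by rw [← hub]; rfl

lemma DisjointReps.comp_symm {φ ψ χ : B ≃⋆ₐ[ℂ] B} (hφ : ∀ b, φ (χ b) = ψ b)
    (h : DisjointReps (π₀.comp (χ : B →⋆ₐ[ℂ] B)) π₀) :
    DisjointReps (π₀.comp (φ.symm : B →⋆ₐ[ℂ] B)) (π₀.comp (ψ.symm : B →⋆ₐ[ℂ] B)) :=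
  fun S hS => h S fun b => by
    have hb : φ.symm (ψ b) = χ b := φ.symm_apply_eq.2 (hφ b).symm
    simpa [hb] using hS (ψ b)

end InducedRepresentations

theorem commutant_of_induced_rep_commutes_with_blocks_general
    {G J : Type*} [Group G] [Fintype J]
    {α : G → A ≃⋆ₐ[ℂ] A} (hα : ∀ (g h : G) (x : A), α (g * h) x = α g (α h x))
    {π₀ : A →⋆ₐ[ℂ] (H₁ →L[ℂ] H₁)} (hπ₀ : IsFactorRep π₀)
    {π : A →⋆ₐ[ℂ] (H₂ →L[ℂ] H₂)} {U : G → unitary (H₂ →L[ℂ] H₂)}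
    (hcov : ∀ (g : G) (x : A),
      π (α g x) = (U g : H₂ →L[ℂ] H₂) * π x * star (U g : H₂ →L[ℂ] H₂))
    {ι : H₁ →L[ℂ] H₂} (hι : Intertwines π₀ π ι) {g : J → G}
    (hg : Pairwise fun j k => ¬ QuasiEquiv (π₀.comp (α ((g j)⁻¹ * g k) : A →⋆ₐ[ℂ] A)) π₀)
    {p : J → (H₂ →L[ℂ] H₂)}
    (hp : ∀ j, p j = (U (g j) : H₂ →L[ℂ] H₂) * (ι ∘L adjoint ι) * star (U (g j) : H₂ →L[ℂ] H₂))
    (hp_sum : ∑ j, p j = 1) {T : H₂ →L[ℂ] H₂} (hT : T ∈ Set.centralizer (Set.range π)) (j : J) :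
    T * p j = p j * T := by
  let W (j : J) : H₁ →L[ℂ] H₂ := (U (g j) : H₂ →L[ℂ] H₂) ∘L ι
  have hpW (j : J) : p j = W j ∘L adjoint (W j) := by rw [hp, adjoint_comp]; rfl
  have hdisjoint : Pairwise fun j k => DisjointReps
      (π₀.comp ((α (g j)).symm : A →⋆ₐ[ℂ] A)) (π₀.comp ((α (g k)).symm : A →⋆ₐ[ℂ] A)) :=
    fun j k hjk => DisjointReps.comp_symm (fun a => by rw [← hα, mul_inv_cancel_left])
      ((hπ₀.comp_of_surjective (α _).surjective).disjointReps_of_not_quasiEquiv hπ₀ (hg hjk))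
  simp only [hpW] at hp_sum ⊢
  exact commute_comp_adjoint_of_pairwise_disjointReps hdisjoint
    (fun j => hι.unitary_comp (hcov (g j))) hp_sum (intertwines_self_iff.2 hT) j

end Representations

/-- Let `(π, U)` be the covariant representation of `(A, G, α)` induced from
a covariant representation `(π₀, V)` of `(A, G₀, α|_{G₀})` on `H₀` (realized inside `H` via
an isometry `ι`, with `H = ⊕_j U_{g_j} H₀` for coset representatives `g_j`).  If
(a) `G₀ = {g : π₀ ∘ α_g ≈ π₀}` and (b) `π₀` is a factor representation, then every `T` in
the commutant of `π(A)` commutes with each of the projections `p_j` onto `U_{g_j} H₀`. -/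
theorem commutant_of_induced_rep_commutes_with_blocks
    (H₀ H : Type*) [NormedAddCommGroup H₀] [InnerProductSpace ℂ H₀] [CompleteSpace H₀]
    [NormedAddCommGroup H] [InnerProductSpace ℂ H] [CompleteSpace H]
    (G : Type*) [Group G] [Finite G] (G₀ : Subgroup G)
    (α : G → A ≃⋆ₐ[ℂ] A) (hα : ∀ (g h : G) (x : A), α (g * h) x = α g (α h x))
    (π₀ : A →⋆ₐ[ℂ] (H₀ →L[ℂ] H₀)) (V : G₀ →* unitary (H₀ →L[ℂ] H₀))
    (hcov₀ : ∀ (h : G₀) (x : A),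
      π₀ (α (h : G) x) = (V h : H₀ →L[ℂ] H₀) * π₀ x * star (V h : H₀ →L[ℂ] H₀))
    (π : A →⋆ₐ[ℂ] (H →L[ℂ] H)) (U : G →* unitary (H →L[ℂ] H))
    (hcov : ∀ (g : G) (x : A),
      π (α g x) = (U g : H →L[ℂ] H) * π x * star (U g : H →L[ℂ] H))
    -- `ι` realizes `H₀` as a subspace of `H`
    (ι : H₀ →L[ℂ] H) (hι : (ContinuousLinearMap.adjoint ι).comp ι = 1)
    -- `H₀` is invariant under `π(A)` and carries the representation `π₀`
    (hinv : ∀ a : A, π a * (ι.comp (ContinuousLinearMap.adjoint ι)) =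
      (ι.comp (ContinuousLinearMap.adjoint ι)) * π a)
    (hcompr : ∀ a : A, (ContinuousLinearMap.adjoint ι).comp ((π a).comp ι) = π₀ a)
    -- `U` restricted to `G₀` on `H₀` is `V`
    (hres : ∀ h : G₀, ((U (h : G) : H →L[ℂ] H)).comp ι = ι.comp (V h : H₀ →L[ℂ] H₀))
    -- coset representatives `g 0 = 1, g 1, ..., g r` of the left `G₀`-cosets
    (r : ℕ) (g : Fin (r + 1) → G) (hg0 : g 0 = 1)
    (hg_distinct : ∀ j k : Fin (r + 1), j ≠ k → (g j)⁻¹ * g k ∉ G₀)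
    (hg_cover : ∀ γ : G, ∃ j : Fin (r + 1), (g j)⁻¹ * γ ∈ G₀)
    -- the subspaces `U_{g_j} H₀` decompose `H`
    (p : Fin (r + 1) → (H →L[ℂ] H))
    (hp : ∀ j, p j = (U (g j) : H →L[ℂ] H) * (ι.comp (ContinuousLinearMap.adjoint ι)) *
      star (U (g j) : H →L[ℂ] H))
    (hp_sum : ∑ j, p j = 1)
    -- (a) `G₀` is exactly the set of `g` with `π₀ ∘ α_g` quasi-equivalent to `π₀`
    (hG₀ : ∀ γ : G, γ ∈ G₀ ↔ QuasiEquiv (π₀.comp ((α γ : A ≃⋆ₐ[ℂ] A) : A →⋆ₐ[ℂ] A)) π₀)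
    -- (b) `π₀` is a factor representation
    (hfactor : ∀ T : H₀ →L[ℂ] H₀,
      T ∈ Set.centralizer (Set.range (⇑π₀)) →
      T ∈ Set.centralizer (Set.centralizer (Set.range (⇑π₀))) →
      ∃ c : ℂ, T = c • (1 : H₀ →L[ℂ] H₀)) :
    ∀ T : H →L[ℂ] H, T ∈ Set.centralizer (Set.range (⇑π)) →
      ∀ j : Fin (r + 1), T * p j = p j * T := by
  intro T hT j
  exact commutant_of_induced_rep_commutes_with_blocks_general hα hfactor hcov
    (intertwines_of_isometry_of_compression hι hinv hcompr)
    (fun j k hjk => mt (hG₀ _).2 (hg_distinct j k hjk)) hp hp_sum hT j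
end
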